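/- arXiv:2008.00753 — 2 statements merged into one kernel-verified Lean document; each statement's English description precedes it below -/
import Mathlib

section
/- Let G be the cycle graph on γ ≥ 3 vertices (so δ = γ edges), let g ≡ 0 (so p_a = 1), and let w : V → ℚ be any function with 0 < w(v) < 1 and ∑ w(v) = 1. Set λ(v) = 1 − g(v) − w(v)·(1 − p_a) = 1. Then every depth-one datum (r,s,a,b) on G has defect Δ = (∑_{v∈V} r(v)) − ∑_e s(e) ≥ 0, with Δ = 0 if and only if a(e) = b(e) = 0 for every edge e. -/
open Finset

/-- A depth-one datum on a graph `G` (encoding a depth one sheaf on a nodal curve with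
dual graph `G`): ranks `r` on vertices (components), and at each edge (node) `e` the
free rank `s e` of the stalk and torsion parts `a v e` attached to each endpoint `v`
of `e`, subject to the compatibility `r v = s e + a v e` for `v` an endpoint of `e`.
For an edge `e` with chosen endpoints `u_e, v_e`, the paper's `a(e)`, `b(e)` are
`a u_e e` and `a v_e e`. -/
structure DepthOneDatum {V : Type*} (G : SimpleGraph V) where
  r : V → ℕ
  s : Sym2 V → ℕ
  a : V → Sym2 V → ℕ
  compat : ∀ e ∈ G.edgeSet, ∀ v ∈ e, r v = s e + a v e

variable {V : Type*} [Fintype V] [DecidableEq V]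

/-- The defect `Δ = (∑ v, r v · λ v) − ∑ e, s e` of a depth-one datum
(equal to `Δ_w(E) = wdeg E − ∑ deg E_i` for the corresponding sheaf). -/
def DepthOneDatum.defect {G : SimpleGraph V} [DecidableRel G.Adj]
    (lam : V → ℚ) (D : DepthOneDatum G) : ℚ :=
  (∑ v : V, (D.r v : ℚ) * lam v) - ∑ e ∈ G.edgeFinset, (D.s e : ℚ)

/-- The residual rank `t_e = a(e) + b(e)` of a depth-one datum at an edge `e`. -/
def DepthOneDatum.tRes {G : SimpleGraph V} (D : DepthOneDatum G) (e : Sym2 V) : ℚ :=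
  Sym2.lift ⟨fun x y => (D.a x e : ℚ) + (D.a y e : ℚ), fun _ _ => add_comm _ _⟩ e

/-- A depth-one datum is locally free when all torsion parts `a`, `b` vanish at all edges. -/
def DepthOneDatum.LocFree {G : SimpleGraph V} (D : DepthOneDatum G) : Prop :=
  ∀ e ∈ G.edgeSet, ∀ v ∈ e, D.a v e = 0

/-- `N(B)`: the number of edges of `G` with both endpoints in `B`. -/
def insideCount (G : SimpleGraph V) [DecidableRel G.Adj] (B : Finset V) : ℕ :=
  (G.edgeFinset.filter (fun e => e ∈ B.sym2)).card

/-- `δ_B`: the number of edges of `G` with exactly one endpoint in `B`. -/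
def crossCount (G : SimpleGraph V) [DecidableRel G.Adj] (B : Finset V) : ℕ :=
  (G.edgeFinset.filter (fun e => e ∉ B.sym2 ∧ e ∉ Bᶜ.sym2)).card

/-- `Δ_w(O_B) = (∑_{v ∈ B} λ v) − N(B)`. -/
def DeltaO (G : SimpleGraph V) [DecidableRel G.Adj] (lam : V → ℚ) (B : Finset V) : ℚ :=
  (∑ v ∈ B, lam v) - (insideCount G B : ℚ)

/-!
By the handshake identity `∑ v, deg v · r v = ∑ e, (r u_e + r v_e)` and the compatibility
`r u_e + r v_e = 2 s(e) + t_e`, twice the defect equals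
`∑ v, (2 λ v - deg v) · r v + ∑ e, t_e`. The first sum vanishes when `λ v = deg v / 2`, which is
the case of the canonical polarization on any graph, and of every polarization when
`p_a = 1` and the graph is a cycle, where `λ v = 1` and `deg v = 2`.
-/

theorem sum_degree_nsmul_eq_sum_edgeFinset {α M : Type*} [Fintype α] [DecidableEq α]
    [AddCommMonoid M] (G : SimpleGraph α) [DecidableRel G.Adj] (f : α → M) :
    ∑ v, G.degree v • f v = ∑ e ∈ G.edgeFinset, ∑ v ∈ e.toFinset, f v := by
  calc ∑ v, G.degree v • f v = ∑ v, ∑ _e ∈ G.incidenceFinset v, f v := by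
        simp only [sum_const, SimpleGraph.card_incidenceFinset_eq_degree]
    _ = ∑ e ∈ G.edgeFinset, ∑ v ∈ e.toFinset, f v :=
        sum_comm' fun v e => by
          simp [SimpleGraph.mem_incidenceFinset, SimpleGraph.incidenceSet, and_comm]

namespace DepthOneDatum

variable {α : Type*} {G : SimpleGraph α} (D : DepthOneDatum G)

theorem tRes_nonneg (e : Sym2 α) : 0 ≤ D.tRes e := by
  induction e with
  | _ x y => exact add_nonneg (Nat.cast_nonneg _) (Nat.cast_nonneg _)

theorem tRes_eq_zero_iff {e : Sym2 α} : D.tRes e = 0 ↔ ∀ v ∈ e, D.a v e = 0 := by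
  induction e with
  | _ x y => simp [tRes, add_eq_zero_iff_of_nonneg]

theorem sum_toFinset_r [DecidableEq α] {e : Sym2 α} (he : e ∈ G.edgeSet) :
    ∑ v ∈ e.toFinset, (D.r v : ℚ) = 2 * D.s e + D.tRes e := by
  induction e with
  | _ x y =>
    have hx : D.r x = D.s s(x, y) + D.a x s(x, y) := D.compat _ he x (Sym2.mem_mk_left x y)
    have hy : D.r y = D.s s(x, y) + D.a y s(x, y) := D.compat _ he y (Sym2.mem_mk_right x y)
    rw [Sym2.toFinset_mk_eq, sum_pair (G.ne_of_adj he), hx, hy, tRes, Sym2.lift_mk]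
    push_cast
    ring

variable [Fintype α] [DecidableRel G.Adj]

theorem sum_tRes_eq_zero_iff : ∑ e ∈ G.edgeFinset, D.tRes e = 0 ↔ D.LocFree := by
  simp only [sum_eq_zero_iff_of_nonneg fun e _ => D.tRes_nonneg e, SimpleGraph.mem_edgeFinset,
    tRes_eq_zero_iff, LocFree]

theorem sum_degree_mul_r :
    ∑ v, (G.degree v : ℚ) * D.r v =
      2 * ∑ e ∈ G.edgeFinset, (D.s e : ℚ) + ∑ e ∈ G.edgeFinset, D.tRes e := by
  classical
  simp only [← nsmul_eq_mul]
  rw [sum_degree_nsmul_eq_sum_edgeFinset,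
    sum_congr rfl fun e he => D.sum_toFinset_r (SimpleGraph.mem_edgeFinset.mp he),
    sum_add_distrib, mul_sum]

theorem two_mul_defect (lam : α → ℚ) :
    2 * D.defect lam =
      ∑ v, (2 * lam v - G.degree v) * D.r v + ∑ e ∈ G.edgeFinset, D.tRes e := by
  have hsplit : ∑ v, (2 * lam v - G.degree v) * D.r v =
      2 * ∑ v, D.r v * lam v - ∑ v, (G.degree v : ℚ) * D.r v := by
    rw [mul_sum, ← sum_sub_distrib]
    exact sum_congr rfl fun v _ => by ring
  rw [hsplit, sum_degree_mul_r, defect]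
  ring

variable {lam : α → ℚ}

theorem defect_nonneg (hlam : ∀ v, G.degree v ≤ 2 * lam v) : 0 ≤ D.defect lam := by
  have hvert : 0 ≤ ∑ v, (2 * lam v - G.degree v) * D.r v :=
    sum_nonneg fun v _ => mul_nonneg (sub_nonneg.mpr (hlam v)) (Nat.cast_nonneg _)
  have hedge : 0 ≤ ∑ e ∈ G.edgeFinset, D.tRes e := sum_nonneg fun e _ => D.tRes_nonneg e
  linarith [D.two_mul_defect lam]

theorem defect_eq_zero_iff (hlam : ∀ v, 2 * lam v = G.degree v) :
    D.defect lam = 0 ↔ D.LocFree := by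
  have hdefect : 2 * D.defect lam = ∑ e ∈ G.edgeFinset, D.tRes e := by
    simp only [two_mul_defect, hlam, sub_self, zero_mul, sum_const_zero, zero_add]
  rw [← sum_tRes_eq_zero_iff, ← hdefect, mul_eq_zero_iff_left two_ne_zero]

end DepthOneDatum

theorem stmt_16_general {α : Type*} [Fintype α] {G : SimpleGraph α} [DecidableRel G.Adj]
    {lam : α → ℚ} (hlam : ∀ v, 2 * lam v = G.degree v) (D : DepthOneDatum G) :
    0 ≤ D.defect lam ∧ (D.defect lam = 0 ↔ D.LocFree) :=
  ⟨D.defect_nonneg fun v => (hlam v).ge, D.defect_eq_zero_iff hlam⟩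

/-- on the cycle graph with `γ ≥ 3` vertices and all genera `0`
(so `p_a = 1` and `λ ≡ 1`), every polarization `w` is numerically good: every
depth-one datum has defect `(∑ v, r v) − ∑ e, s e ≥ 0`, zero iff locally free. -/
theorem stmt_16 (γ : ℕ) (hγ : 3 ≤ γ)
    (w : Fin γ → ℚ) (hw : ∀ v, 0 < w v ∧ w v < 1) (hwsum : ∑ v, w v = 1)
    (D : DepthOneDatum (SimpleGraph.cycleGraph γ)) :
    0 ≤ D.defect (fun _ => (1 : ℚ))
    ∧ (D.defect (fun _ => (1 : ℚ)) = 0 ↔ D.LocFree) := by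
  obtain ⟨n, rfl⟩ := Nat.exists_eq_add_of_le' hγ
  exact stmt_16_general (fun v => by simp [SimpleGraph.cycleGraph_degree_three_le]) D
end

section
/- Let G be a finite connected simple graph with vertex set V of size γ ≥ 2 and δ edges, and let g : V → ℕ satisfy p_a := (∑_{v∈V} g(v)) + δ − γ + 1 = 1. For B ⊆ V set D(B) = (∑_{v∈B} (1 − g(v))) − N(B) (which equals Δ_w(O_B) for every polarization w, since 1 − p_a = 0). Then: (1) for every nonempty proper subset B ⊆ V, 0 ≤ D(B) ≤ δ_B; (2) the strict inequalities 0 < D(B) < δ_B hold for every nonempty proper subset B with connected induced subgraph if and only if g ≡ 0 and G is a cycle graph. -/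
open Finset

variable {V : Type*} [Fintype V] [DecidableEq V]

/-!
For vertex weights `λ`, the numbers `Δ(O_B)` and `Δ(O_{Bᶜ})` add up to `δ_B` as soon as `∑ λ` is
the number of edges, which for `λ = 1 - g` is the condition `p_a = 1`. So the two bounds of
part (1) are exchanged by complementation, and the upper one holds because, for a root outside `B`,
every vertex of `B` can be charged to the first edge of a geodesic to the root.

On a single vertex the strict inequalities read `0 < 1 - g v < deg v`, so they force `g = 0` and all
degrees to be at least `2`; as there are as many edges as vertices, `G` is then `2`-regular, hence a
cycle. Conversely, weighting each vertex by half its degree gives `Δ(O_B) = δ_B / 2`, and `δ_B > 0`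
by connectedness.
-/

section Connectivity

variable {α : Type*} {G : SimpleGraph α}

theorem exists_adj_mem_notMem_of_preconnected (hG : G.Preconnected) {S : Set α}
    (hS : S.Nonempty) (hS' : S ≠ Set.univ) : ∃ u ∈ S, ∃ v ∉ S, G.Adj u v := by
  obtain ⟨a, ha⟩ := hS
  obtain ⟨b, hb⟩ := (Set.ne_univ_iff_exists_notMem S).1 hS'
  obtain ⟨p⟩ := hG a b
  obtain ⟨d, -, hfst, hsnd⟩ := p.exists_boundary_dart S ha hb
  exact ⟨d.fst, hfst, d.snd, hsnd, d.adj⟩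

theorem exists_adj_dist_add_one_eq_of_reachable {v r : α} (h : G.Reachable v r) (hv : v ≠ r) :
    ∃ w, G.Adj v w ∧ G.dist w r + 1 = G.dist v r := by
  obtain ⟨p, hp⟩ := h.exists_walk_length_eq_dist
  cases p with
  | nil => exact absurd rfl hv
  | @cons _ w _ hadj q =>
    refine ⟨w, hadj, le_antisymm ?_ ?_⟩
    · rw [← hp, SimpleGraph.Walk.length_cons]
      exact Nat.succ_le_succ (SimpleGraph.dist_le q)
    · obtain ⟨q', hq'⟩ := q.reachable.exists_walk_length_eq_dist
      rw [← hq', ← SimpleGraph.Walk.length_cons hadj q']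
      exact SimpleGraph.dist_le _

end Connectivity

section Regular

variable {α β : Type*} {G : SimpleGraph α} {H : SimpleGraph β}

theorem exists_adj_map_eq_of_degree_le {f : H →g G} (hf : Function.Injective f) {x : β}
    [Fintype (H.neighborSet x)] [Fintype (G.neighborSet (f x))]
    (hdeg : G.degree (f x) ≤ H.degree x) {v : α} (hv : G.Adj (f x) v) :
    ∃ y, H.Adj x y ∧ f y = v := by
  have hsub : (H.neighborFinset x).map ⟨f, hf⟩ ⊆ G.neighborFinset (f x) := by
    intro w hw
    obtain ⟨y, hy, rfl⟩ := Finset.mem_map.1 hw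
    exact (G.mem_neighborFinset _ _).2 (f.map_adj ((H.mem_neighborFinset _ _).1 hy))
  have heq := Finset.eq_of_subset_of_card_le hsub (by simpa using hdeg)
  have hmem : v ∈ (H.neighborFinset x).map ⟨f, hf⟩ := by
    rw [heq]
    exact (G.mem_neighborFinset _ _).2 hv
  simpa using hmem

theorem nonempty_iso_of_injective_of_degree_le [Nonempty β] [H.LocallyFinite] [G.LocallyFinite]
    (hG : G.Preconnected) {f : H →g G} (hf : Function.Injective f)
    (hdeg : ∀ x, G.degree (f x) ≤ H.degree x) : Nonempty (H ≃g G) := by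
  have hsurj : Function.Surjective f := by
    rw [← Set.range_eq_univ]
    by_contra hrange
    obtain ⟨_, ⟨x, rfl⟩, v, hv, hadj⟩ :=
      exists_adj_mem_notMem_of_preconnected hG (Set.range_nonempty f) hrange
    obtain ⟨y, -, hy⟩ := exists_adj_map_eq_of_degree_le hf (hdeg x) hadj
    exact hv ⟨y, hy⟩
  refine ⟨⟨Equiv.ofBijective f ⟨hf, hsurj⟩, fun {x y} => ⟨fun hadj => ?_, fun h => f.map_adj h⟩⟩⟩
  obtain ⟨z, hz, hzy⟩ := exists_adj_map_eq_of_degree_le hf (hdeg x) hadj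
  exact hf hzy ▸ hz

theorem isRegularOfDegree_two_cycleGraph {n : ℕ} (hn : 3 ≤ n) :
    (SimpleGraph.cycleGraph n).IsRegularOfDegree 2 := by
  obtain ⟨m, rfl⟩ := Nat.exists_eq_add_of_le' hn
  exact fun _ => SimpleGraph.cycleGraph_degree_three_le

variable [Fintype α] [DecidableRel G.Adj]

theorem card_mul_eq_two_mul_card_edgeFinset_of_isRegularOfDegree {d : ℕ}
    (hreg : G.IsRegularOfDegree d) :
    Fintype.card α * d = 2 * #G.edgeFinset := by
  simp [← G.sum_degrees_eq_twice_card_edges, hreg.degree_eq]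

theorem isRegularOfDegree_of_le_degree {d : ℕ} (hle : ∀ v, d ≤ G.degree v)
    (hcard : 2 * #G.edgeFinset ≤ Fintype.card α * d) : G.IsRegularOfDegree d := by
  have hsum : ∑ _v : α, d = ∑ v, G.degree v := by
    refine le_antisymm (Finset.sum_le_sum fun v _ => hle v) ?_
    simpa [G.sum_degrees_eq_twice_card_edges] using hcard
  intro v
  exact ((Finset.sum_eq_sum_iff_of_le fun v _ => hle v).1 hsum v (Finset.mem_univ v)).symm

theorem isRegularOfDegree_two_iff_exists_iso_cycleGraph (hG : G.Connected) :
    G.IsRegularOfDegree 2 ↔ ∃ n, 3 ≤ n ∧ Nonempty (G ≃g SimpleGraph.cycleGraph n) := by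
  constructor
  · intro hreg
    have hcyclic : ¬ G.IsAcyclic := fun hacyclic => by
      have hE := SimpleGraph.IsTree.card_edgeFinset ⟨hG, hacyclic⟩
      have hV := card_mul_eq_two_mul_card_edgeFinset_of_isRegularOfDegree hreg
      omega
    simp only [SimpleGraph.isAcyclic_iff_free_cycleGraph, not_forall, SimpleGraph.not_free]
      at hcyclic
    obtain ⟨n, hn, ⟨f⟩⟩ := hcyclic
    have : Nonempty (Fin n) := ⟨⟨0, by omega⟩⟩
    obtain ⟨e⟩ := nonempty_iso_of_injective_of_degree_le hG.preconnected f.injective fun x => by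
      rw [hreg, isRegularOfDegree_two_cycleGraph hn]
    exact ⟨n, hn, ⟨e.symm⟩⟩
  · rintro ⟨n, hn, ⟨e⟩⟩ v
    rw [← e.degree_eq v, isRegularOfDegree_two_cycleGraph hn]

end Regular

section Counting

variable (G : SimpleGraph V) [DecidableRel G.Adj] (lam : V → ℚ) (B : Finset V)

theorem insideCount_add_insideCount_compl_add_crossCount :
    insideCount G B + insideCount G Bᶜ + crossCount G B = #G.edgeFinset := by
  simp only [insideCount, crossCount, Finset.card_filter, Finset.card_eq_sum_ones G.edgeFinset,
    ← Finset.sum_add_distrib]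
  refine Finset.sum_congr rfl fun e _ => ?_
  induction e with | _ x y
  by_cases hx : x ∈ B <;> by_cases hy : y ∈ B <;> simp [hx, hy]

theorem sum_degree_eq_two_mul_insideCount_add_crossCount :
    ∑ v ∈ B, G.degree v = 2 * insideCount G B + crossCount G B := by
  have hdeg (v : V) : G.degree v = ∑ e ∈ G.edgeFinset, if v ∈ e then 1 else 0 := by
    rw [← G.card_incidenceFinset_eq_degree, G.incidenceFinset_eq_filter, Finset.card_filter]
  simp only [hdeg, insideCount, crossCount, Finset.card_filter, Finset.mul_sum,
    ← Finset.sum_add_distrib]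
  rw [Finset.sum_comm]
  refine Finset.sum_congr rfl fun e he => ?_
  induction e with | _ x y
  have hxy : x ≠ y := (SimpleGraph.mem_edgeFinset.1 he).ne
  have hends (v : V) : (if v ∈ s(x, y) then 1 else 0)
      = (if v = x then 1 else 0) + (if v = y then 1 else 0) := by
    grind
  simp only [hends, Finset.sum_add_distrib, Finset.sum_ite_eq']
  by_cases hx : x ∈ B <;> by_cases hy : y ∈ B <;> simp [hx, hy]

theorem crossCount_compl : crossCount G Bᶜ = crossCount G B := by
  simp only [crossCount, compl_compl, and_comm]

theorem insideCount_singleton (v : V) : insideCount G {v} = 0 := by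
  rw [insideCount, Finset.card_eq_zero, Finset.filter_eq_empty_iff]
  intro e he hmem
  rw [Finset.sym2_singleton, Finset.mem_singleton] at hmem
  subst hmem
  exact (SimpleGraph.mem_edgeFinset.1 he).ne rfl

theorem crossCount_singleton (v : V) : crossCount G {v} = G.degree v := by
  simpa [insideCount_singleton] using
    (sum_degree_eq_two_mul_insideCount_add_crossCount G {v}).symm

theorem deltaO_singleton (v : V) : DeltaO G lam {v} = lam v := by
  simp [DeltaO, insideCount_singleton]

theorem deltaO_add_deltaO_compl :
    DeltaO G lam B + DeltaO G lam Bᶜ = ∑ v, lam v - #G.edgeFinset + crossCount G B := by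
  simp only [DeltaO, ← insideCount_add_insideCount_compl_add_crossCount G B,
    ← Finset.sum_add_sum_compl B lam]
  push_cast
  ring

theorem deltaO_degree_div_two :
    DeltaO G (fun v => (G.degree v : ℚ) / 2) B = crossCount G B / 2 := by
  rw [DeltaO, ← Finset.sum_div, ← Nat.cast_sum,
    sum_degree_eq_two_mul_insideCount_add_crossCount]
  push_cast
  ring

end Counting

section Bounds

variable {G : SimpleGraph V} [DecidableRel G.Adj] {lam : V → ℚ} {B : Finset V}

theorem crossCount_pos (hG : G.Preconnected) (hB : B.Nonempty) (hB' : B ≠ univ) :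
    0 < crossCount G B := by
  obtain ⟨u, hu, v, hv, hadj⟩ := exists_adj_mem_notMem_of_preconnected hG
    (Finset.coe_nonempty.2 hB) (mt Finset.coe_eq_univ.1 hB')
  rw [Finset.mem_coe] at hu hv
  exact Finset.card_pos.2 ⟨s(u, v), by simp [hu, hv, hadj]⟩

theorem card_le_insideCount_add_crossCount (hG : G.Preconnected) (hB : B ≠ univ) :
    #B ≤ insideCount G B + crossCount G B := by
  obtain ⟨r, hr⟩ : ∃ r, r ∉ B := by simpa [Finset.eq_univ_iff_forall] using hB
  have hparent : ∀ v ∈ B, ∃ w, G.Adj v w ∧ G.dist w r + 1 = G.dist v r := fun v hv =>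
    exists_adj_dist_add_one_eq_of_reachable (hG v r) (ne_of_mem_of_not_mem hv hr)
  choose! parent hadj hdist using hparent
  have hinj : Set.InjOn (fun v => s(v, parent v)) B := by
    intro v hv u hu huv
    rcases Sym2.eq_iff.1 huv with ⟨h, -⟩ | ⟨hvu, huv⟩
    · exact h
    · have hdist_v := hdist v hv
      have hdist_u := hdist u hu
      rw [huv] at hdist_v
      rw [← hvu] at hdist_u
      omega
  have hcard : #B ≤ #{e ∈ G.edgeFinset | e ∉ Bᶜ.sym2} :=
    Finset.card_le_card_of_injOn _ (fun v hv => by simp [hadj v hv, Finset.mem_coe.1 hv]) hinj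
  have hmeet : insideCount G Bᶜ + #{e ∈ G.edgeFinset | e ∉ Bᶜ.sym2} = #G.edgeFinset :=
    Finset.card_filter_add_card_filter_not _
  have hsplit := insideCount_add_insideCount_compl_add_crossCount G B
  omega

theorem deltaO_le_crossCount (hG : G.Preconnected) (hlam : ∀ v ∈ B, lam v ≤ 1) (hB : B ≠ univ) :
    DeltaO G lam B ≤ crossCount G B := by
  have hsum : ∑ v ∈ B, lam v ≤ #B := by simpa using Finset.sum_le_sum hlam
  have hcard : (#B : ℚ) ≤ insideCount G B + crossCount G B := by
    exact_mod_cast card_le_insideCount_add_crossCount hG hB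
  rw [DeltaO]
  linarith

theorem deltaO_nonneg (hG : G.Preconnected) (hlam : ∀ v ∉ B, lam v ≤ 1)
    (hsum : #G.edgeFinset ≤ ∑ v, lam v) (hB : B.Nonempty) : 0 ≤ DeltaO G lam B := by
  have hB' : Bᶜ ≠ univ := (Finset.compl_ne_univ_iff_nonempty B).2 hB
  have hcompl := deltaO_le_crossCount hG (fun v hv => hlam v (Finset.mem_compl.1 hv)) hB'
  rw [crossCount_compl] at hcompl
  linarith [deltaO_add_deltaO_compl G lam B]

theorem deltaO_pos_and_lt_crossCount (hG : G.Preconnected) (hlam : ∀ v, lam v = G.degree v / 2)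
    (hB : B.Nonempty) (hB' : B ≠ univ) : 0 < DeltaO G lam B ∧ DeltaO G lam B < crossCount G B := by
  have hcross : (0 : ℚ) < crossCount G B := Nat.cast_pos.2 (crossCount_pos hG hB hB')
  rw [funext hlam, deltaO_degree_div_two]
  exact ⟨half_pos hcross, half_lt_self hcross⟩

end Bounds

/-- for a connected dual graph with `p_a = 1` and
`D(B) = (∑_{v∈B} (1 − g v)) − N(B)`: (1) `0 ≤ D(B) ≤ δ_B` for every nonempty proper
`B`; (2) the strict inequalities hold for every nonempty proper connected `B` iff
`g ≡ 0` and `G` is a cycle graph. -/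
theorem stmt_18 (G : SimpleGraph V) [DecidableRel G.Adj]
    (hG : G.Connected) (hγ : 2 ≤ Fintype.card V)
    (g : V → ℕ)
    (hpa : (∑ v, (g v : ℚ)) + (G.edgeFinset.card : ℚ) - (Fintype.card V : ℚ) + 1 = 1) :
    (∀ B : Finset V, B.Nonempty → B ≠ Finset.univ →
        0 ≤ DeltaO G (fun v => 1 - (g v : ℚ)) B
        ∧ DeltaO G (fun v => 1 - (g v : ℚ)) B ≤ (crossCount G B : ℚ))
    ∧ ((∀ B : Finset V, B.Nonempty → B ≠ Finset.univ →
          (G.induce (B : Set V)).Connected →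
          0 < DeltaO G (fun v => 1 - (g v : ℚ)) B
          ∧ DeltaO G (fun v => 1 - (g v : ℚ)) B < (crossCount G B : ℚ))
        ↔ ((∀ v, g v = 0)
            ∧ ∃ n, 3 ≤ n ∧ Nonempty (G ≃g SimpleGraph.cycleGraph n))) := by
  have hlam (v : V) : 1 - (g v : ℚ) ≤ 1 := by simp
  have hsum : ∑ v, (1 - (g v : ℚ)) = #G.edgeFinset := by
    simp only [Finset.sum_sub_distrib, Finset.sum_const, Finset.card_univ, nsmul_one]
    linarith
  have : Nontrivial V := Fintype.one_lt_card_iff_nontrivial.1 hγ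
  refine ⟨fun B hB hB' => ⟨deltaO_nonneg hG.preconnected (fun v _ => hlam v) hsum.ge hB,
    deltaO_le_crossCount hG.preconnected (fun v _ => hlam v) hB'⟩, fun hstrict => ?_, ?_⟩
  · have hvertex (v : V) : (0 : ℚ) < 1 - g v ∧ (1 - g v : ℚ) < G.degree v := by
      simpa only [deltaO_singleton, crossCount_singleton] using
        hstrict {v} (singleton_nonempty v) (singleton_ne_univ v)
          (by rw [coe_singleton]; exact .of_subsingleton)
    have hg (v : V) : g v = 0 :=
      Nat.lt_one_iff.1 (by exact_mod_cast sub_pos.1 (hvertex v).1)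
    have hdeg (v : V) : 2 ≤ G.degree v := by
      simpa [hg, Nat.succ_le_iff] using (hvertex v).2
    have hcard : Fintype.card V = #G.edgeFinset := by exact_mod_cast (by simpa [hg] using hsum)
    exact ⟨hg, (isRegularOfDegree_two_iff_exists_iso_cycleGraph hG).1
      (isRegularOfDegree_of_le_degree hdeg (by omega))⟩
  · rintro ⟨hg, hcycle⟩ B hB hB' -
    have hreg := (isRegularOfDegree_two_iff_exists_iso_cycleGraph hG).2 hcycle
    exact deltaO_pos_and_lt_crossCount hG.preconnected
      (fun v => by simp [hg, hreg.degree_eq]) hB hB'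
end
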